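/- Let A₁,…,A_p be symmetric real n×n matrices with p ≥ 2. Set S_{αβ} = trace(AᵅAᵝ), S_α = S_{αα} = N(A_α) (the square of the Frobenius norm), and S = Σ_α S_α. Then Σ_{α,β} N(AᵅAᵝ − AᵝAᵅ) + Σ_{α,β} S_{αβ}² ≤ (3/2)·S². -/

import Mathlib

open Matrix BigOperators

/-- Squared Frobenius norm of a real matrix. -/
noncomputable def frobN {n : ℕ} (A : Matrix (Fin n) (Fin n) ℝ) : ℝ := (Aᵀ * A).trace

/-!
Both sides are invariant under an orthogonal change of the frame `A₁, …, A_p`, so after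
diagonalizing the Gram matrix the `A_β` may be taken pairwise orthogonal. Fix `A = A_α`; conjugating
by an orthogonal matrix, let `A` be diagonal with entries `x_i`. Then `∑_β ‖[A, A_β]‖²` is the
Dirichlet energy `∑_{i,j} W_ij (x_i - x_j)²` of the weighted graph with
`W_ij = ∑_{β ≠ α} (A_β)_ij²`. If `‖A_β‖² ≤ t` for all `β ≠ α`, Bessel's inequality against
`e_ij + e_ji` gives `2 W_ij ≤ t`, and the Anderson–Morley bound of the largest Laplacian eigenvalue
by the degree sums of adjacent vertices yields
`∑_β ‖[A, A_β]‖² ≤ ‖A‖² (∑_{β ≠ α} ‖A_β‖² + t)`.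

Let `M` be the largest `‖A_α‖²`, attained at `α₀`. Using `t = M` for `α ≠ α₀`, but `t = S - M` for
`α₀`, and summing over `α`, the left-hand side is at most
`S² + 2 S M - 2 M² = (3/2) S² - (S - 2 M)² / 2`.
-/

theorem le_of_mul_self_le_mul {α : Type*} [Mul α] [Zero α] [LinearOrder α] [PosMulStrictMono α]
    {a b : α} (hb : 0 ≤ b) (h : a * a ≤ a * b) : a ≤ b := by
  by_contra! hba
  exact h.not_gt (mul_lt_mul_of_pos_left hba (hb.trans_lt hba))

section InnerProductSpace

variable {𝕜 E ι : Type*} [RCLike 𝕜] [NormedAddCommGroup E] [InnerProductSpace 𝕜 E]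

open scoped InnerProductSpace

theorem norm_sum_smul_sq_of_pairwise_inner_eq_zero {s : Finset ι} {v : ι → E}
    (hv : (s : Set ι).Pairwise fun i j ↦ ⟪v i, v j⟫_𝕜 = 0) (a : ι → 𝕜) :
    ‖∑ i ∈ s, a i • v i‖ ^ 2 = ∑ i ∈ s, ‖a i‖ ^ 2 * ‖v i‖ ^ 2 := by
  rw [← RCLike.ofReal_inj (K := 𝕜), RCLike.ofReal_pow, ← inner_self_eq_norm_sq_to_K, sum_inner,
    RCLike.ofReal_sum]
  refine Finset.sum_congr rfl fun i hi ↦ ?_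
  rw [inner_sum, Finset.sum_eq_single_of_mem i hi]
  · rw [inner_self_eq_norm_sq_to_K, norm_smul]
    push_cast
    ring
  · intro j hj hji
    rw [inner_smul_left, inner_smul_right, hv hi hj hji.symm, mul_zero, mul_zero]

theorem sum_norm_inner_sq_le_of_pairwise_inner_eq_zero {s : Finset ι} {v : ι → E}
    (hv : (s : Set ι).Pairwise fun i j ↦ ⟪v i, v j⟫_𝕜 = 0) {t : ℝ} (ht : 0 ≤ t)
    (hvt : ∀ i ∈ s, ‖v i‖ ^ 2 ≤ t) (x : E) :
    ∑ i ∈ s, ‖⟪v i, x⟫_𝕜‖ ^ 2 ≤ t * ‖x‖ ^ 2 := by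
  set C := ∑ i ∈ s, ‖⟪v i, x⟫_𝕜‖ ^ 2
  set y := ∑ i ∈ s, ⟪v i, x⟫_𝕜 • v i
  have hyx : ‖⟪y, x⟫_𝕜‖ = C := by
    have h : ⟪y, x⟫_𝕜 = (C : 𝕜) := by
      simp only [y, C, sum_inner, inner_smul_left, RCLike.conj_mul, RCLike.ofReal_sum,
        RCLike.ofReal_pow]
    rw [h, RCLike.norm_ofReal, abs_of_nonneg (by positivity)]
  have hy : ‖y‖ ^ 2 ≤ C * t := by
    rw [norm_sum_smul_sq_of_pairwise_inner_eq_zero hv, Finset.sum_mul]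
    gcongr with i hi
    exact hvt i hi
  refine le_of_mul_self_le_mul (by positivity) ?_
  calc
    C * C = ‖⟪y, x⟫_𝕜‖ ^ 2 := by rw [hyx, sq]
    _ ≤ (‖y‖ * ‖x‖) ^ 2 := by gcongr; exact norm_inner_le_norm y x
    _ = ‖y‖ ^ 2 * ‖x‖ ^ 2 := mul_pow _ _ _
    _ ≤ C * t * ‖x‖ ^ 2 := by gcongr
    _ = C * (t * ‖x‖ ^ 2) := mul_assoc _ _ _

end InnerProductSpace

section FrameChange

/-- Change of frame: the family of linear combinations of the `v a` whose coefficients are the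
columns of `U`. -/
def frameChange {R E ι κ : Type*} [Fintype ι] [Semiring R] [AddCommMonoid E] [Module R E]
    (U : Matrix ι κ R) (v : ι → E) (c : κ) : E :=
  ∑ a, U a c • v a

theorem map_frameChange {R E F ι κ : Type*} [Fintype ι] [Semiring R] [AddCommMonoid E]
    [Module R E] [AddCommMonoid F] [Module R F] (l : E →ₗ[R] F) (U : Matrix ι κ R) (v : ι → E)
    (c : κ) : l (frameChange U v c) = frameChange U (l ∘ v) c := by
  simp only [frameChange, map_sum, map_smul, Function.comp_apply]

theorem isSymm_frameChange {R ι κ n : Type*} [Fintype ι] [Semiring R] (U : Matrix ι κ R)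
    {A : ι → Matrix n n R} (hA : ∀ a, (A a).IsSymm) (c : κ) : (frameChange U A c).IsSymm := by
  simp only [IsSymm, frameChange, transpose_sum, transpose_smul, (hA _).eq]

variable {𝕜 E F ι κ : Type*} [RCLike 𝕜] [NormedAddCommGroup E] [InnerProductSpace 𝕜 E]
  [NormedAddCommGroup F] [InnerProductSpace 𝕜 F] [Fintype ι]

open scoped InnerProductSpace

theorem gram_frameChange (U : Matrix ι κ 𝕜) (v : ι → E) :
    gram 𝕜 (frameChange U v) = Uᴴ * gram 𝕜 v * U := by
  ext c d
  simp only [gram_apply, frameChange, sum_inner, inner_sum, inner_smul_left, inner_smul_right,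
    mul_apply, conjTranspose_apply, Finset.sum_mul, Finset.mul_sum]
  refine Finset.sum_congr rfl fun b _ ↦ Finset.sum_congr rfl fun a _ ↦ ?_
  rw [starRingEnd_apply]
  ring

theorem trace_gram (v : ι → E) : (gram 𝕜 v).trace = ((∑ a, ‖v a‖ ^ 2 : ℝ) : 𝕜) := by
  simp only [trace, diag_apply, gram_apply, inner_self_eq_norm_sq_to_K, RCLike.ofReal_sum,
    RCLike.ofReal_pow]

variable [DecidableEq ι]

theorem trace_conjStarAlgAut (U : unitaryGroup ι 𝕜) (X : Matrix ι ι 𝕜) :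
    (Unitary.conjStarAlgAut 𝕜 _ U X).trace = X.trace := by
  rw [Unitary.conjStarAlgAut_apply, trace_mul_comm, ← mul_assoc, Unitary.coe_star_mul_self, one_mul]

theorem gram_frameChange_unitary (U : unitaryGroup ι 𝕜) (v : ι → E) :
    gram 𝕜 (frameChange U.1 v) = Unitary.conjStarAlgAut 𝕜 _ (star U) (gram 𝕜 v) := by
  rw [gram_frameChange, Unitary.conjStarAlgAut_star_apply, star_eq_conjTranspose]

theorem sum_norm_sq_frameChange (U : unitaryGroup ι 𝕜) (v : ι → E) :
    ∑ c, ‖frameChange U.1 v c‖ ^ 2 = ∑ a, ‖v a‖ ^ 2 := by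
  rw [← RCLike.ofReal_inj (K := 𝕜), ← trace_gram, ← trace_gram, gram_frameChange_unitary,
    trace_conjStarAlgAut]

theorem sum_sum_norm_sq_frameChange (U : unitaryGroup ι 𝕜) (v : ι → E) (B : E →ₗ[𝕜] E →ₗ[𝕜] F) :
    ∑ c, ∑ d, ‖B (frameChange U.1 v c) (frameChange U.1 v d)‖ ^ 2 =
      ∑ a, ∑ b, ‖B (v a) (v b)‖ ^ 2 := calc
  _ = ∑ c, ∑ b, ‖B (frameChange U.1 v c) (v b)‖ ^ 2 := by
    simp only [map_frameChange (B _), sum_norm_sq_frameChange, Function.comp_apply]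
  _ = ∑ b, ∑ c, ‖B.flip (v b) (frameChange U.1 v c)‖ ^ 2 := Finset.sum_comm
  _ = ∑ b, ∑ a, ‖B.flip (v b) (v a)‖ ^ 2 := by
    simp only [map_frameChange (B.flip _), sum_norm_sq_frameChange, Function.comp_apply]
  _ = _ := Finset.sum_comm

theorem exists_unitary_pairwise_inner_frameChange_eq_zero (v : ι → E) :
    ∃ U : unitaryGroup ι 𝕜,
      Pairwise fun c d ↦ ⟪frameChange U.1 v c, frameChange U.1 v d⟫_𝕜 = 0 := by
  have hG := isHermitian_gram 𝕜 v
  refine ⟨hG.eigenvectorUnitary, fun c d hcd ↦ ?_⟩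
  change gram 𝕜 (frameChange _ v) c d = 0
  rw [gram_frameChange_unitary, hG.conjStarAlgAut_star_eigenvectorUnitary,
    diagonal_apply_ne _ hcd]

end FrameChange

section WeightedGraph

variable {V : Type*} [Fintype V] {W : Matrix V V ℝ}

/-- The degree of `i` in the graph on `V` with edge weights `W`, loops counted once. -/
def weightedDegree (W : Matrix V V ℝ) (i : V) : ℝ :=
  ∑ k, W i k

theorem two_mul_degree_add_degree_le (hW : ∀ i j, 0 ≤ W i j) (hsymm : W.IsSymm) {i j : V}
    (hij : i ≠ j) :
    2 * (weightedDegree W i + weightedDegree W j) ≤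
      ∑ k, ∑ l, W k l + W i i + W j j + 2 * W i j := by
  classical
  have hcompl (f : V → ℝ) : ∑ k ∈ ({i, j} : Finset V)ᶜ, f k = ∑ k, f k - (f i + f j) := by
    rw [← Finset.sum_pair hij, ← Finset.sum_compl_add_sum {i, j} f, add_sub_cancel_right]
  have hrow (k : V) : W i k + W j k ≤ ∑ l, W k l := by
    rw [← hsymm.apply i k, ← hsymm.apply j k, ← Finset.sum_pair hij]
    exact Finset.sum_le_univ_sum_of_nonneg (hW k)
  have hsum := Finset.sum_le_sum fun k (_ : k ∈ ({i, j} : Finset V)ᶜ) ↦ hrow k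
  rw [hcompl, hcompl, Finset.sum_add_distrib] at hsum
  unfold weightedDegree
  linarith [hsymm.apply i j]

/-- The Laplacian of the graph on `V` with edge weights `W`. -/
def weightedLaplacian (W : Matrix V V ℝ) (x : V → ℝ) (i : V) : ℝ :=
  ∑ j, W i j * (x i - x j)

/-- The Dirichlet energy of `x` on the graph with edge weights `W`; the sum runs over ordered
pairs, so every edge is counted twice. -/
def dirichletEnergy (W : Matrix V V ℝ) (x : V → ℝ) : ℝ :=
  ∑ i, ∑ j, W i j * (x i - x j) ^ 2

theorem two_mul_sum_mul_weightedLaplacian (hsymm : W.IsSymm) (x : V → ℝ) :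
    2 * ∑ i, x i * weightedLaplacian W x i = dirichletEnergy W x := by
  have h : ∑ i, x i * weightedLaplacian W x i = ∑ i, ∑ j, W i j * (x i * (x i - x j)) := by
    simp only [weightedLaplacian, Finset.mul_sum, mul_left_comm]
  have hswap : ∑ i, x i * weightedLaplacian W x i = ∑ i, ∑ j, W i j * (x j * (x j - x i)) := by
    rw [h, Finset.sum_comm]
    simp only [hsymm.apply]
  rw [two_mul]
  nth_rewrite 1 [h]
  rw [hswap]
  simp only [dirichletEnergy, ← Finset.sum_add_distrib]
  refine Finset.sum_congr rfl fun i _ ↦ Finset.sum_congr rfl fun j _ ↦ ?_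
  ring

theorem weightedLaplacian_sq_le (hW : ∀ i j, 0 ≤ W i j) (x : V → ℝ) (i : V) :
    weightedLaplacian W x i ^ 2 ≤ weightedDegree W i * ∑ j, W i j * (x i - x j) ^ 2 :=
  Finset.sum_sq_le_sum_mul_sum_of_sq_le_mul _ (fun j _ ↦ hW i j)
    (fun j _ ↦ mul_nonneg (hW i j) (sq_nonneg _)) fun j _ ↦ le_of_eq (by ring)

theorem four_mul_sum_weightedLaplacian_sq_le (hW : ∀ i j, 0 ≤ W i j) (hsymm : W.IsSymm) {c : ℝ}
    (hdeg : ∀ i j, i ≠ j → 2 * (weightedDegree W i + weightedDegree W j) ≤ c) (x : V → ℝ) :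
    4 * ∑ i, weightedLaplacian W x i ^ 2 ≤ c * dirichletEnergy W x := by
  set T := ∑ i, ∑ j, weightedDegree W i * (W i j * (x i - x j) ^ 2) with hT
  have hswap : T = ∑ i, ∑ j, weightedDegree W j * (W i j * (x i - x j) ^ 2) := by
    rw [hT, Finset.sum_comm]
    refine Finset.sum_congr rfl fun i _ ↦ Finset.sum_congr rfl fun j _ ↦ ?_
    rw [hsymm.apply, sub_sq_comm]
  have hle : ∑ i, weightedLaplacian W x i ^ 2 ≤ T := by
    simp only [hT, ← Finset.mul_sum]
    exact Finset.sum_le_sum fun i _ ↦ weightedLaplacian_sq_le hW x i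
  have hedge (i j : V) :
      2 * ((weightedDegree W i + weightedDegree W j) * (W i j * (x i - x j) ^ 2)) ≤
        c * (W i j * (x i - x j) ^ 2) := by
    rcases eq_or_ne i j with rfl | hij
    · simp
    · rw [← mul_assoc]
      exact mul_le_mul_of_nonneg_right (hdeg i j hij) (mul_nonneg (hW i j) (sq_nonneg _))
  calc 4 * ∑ i, weightedLaplacian W x i ^ 2 ≤ 2 * (T + T) := by linarith
    _ = ∑ i, ∑ j, 2 * ((weightedDegree W i + weightedDegree W j) * (W i j * (x i - x j) ^ 2)) := by
      nth_rewrite 2 [hswap]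
      simp only [hT, ← Finset.sum_add_distrib, Finset.mul_sum (a := (2 : ℝ)), ← add_mul]
    _ ≤ c * dirichletEnergy W x := by
      simp only [dirichletEnergy, Finset.mul_sum (a := c)]
      exact Finset.sum_le_sum fun i _ ↦ Finset.sum_le_sum fun j _ ↦ hedge i j

theorem dirichletEnergy_le_of_degree_add_degree_le (hW : ∀ i j, 0 ≤ W i j) (hsymm : W.IsSymm)
    {c : ℝ} (hc : 0 ≤ c)
    (hdeg : ∀ i j, i ≠ j → 2 * (weightedDegree W i + weightedDegree W j) ≤ c) (x : V → ℝ) :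
    dirichletEnergy W x ≤ c * ∑ i, x i ^ 2 := by
  refine le_of_mul_self_le_mul (by positivity) ?_
  set Q := dirichletEnergy W x with hQ
  calc
    Q * Q = 4 * (∑ i, x i * weightedLaplacian W x i) ^ 2 := by
      rw [hQ, ← two_mul_sum_mul_weightedLaplacian hsymm]
      ring
    _ ≤ 4 * ((∑ i, x i ^ 2) * ∑ i, weightedLaplacian W x i ^ 2) := by
      gcongr
      exact Finset.sum_mul_sq_le_sq_mul_sq _ _ _
    _ = (∑ i, x i ^ 2) * (4 * ∑ i, weightedLaplacian W x i ^ 2) := by ring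
    _ ≤ (∑ i, x i ^ 2) * (c * Q) := by
      gcongr ?_ * ?_
      exact four_mul_sum_weightedLaplacian_sq_le hW hsymm hdeg x
    _ = Q * (c * ∑ i, x i ^ 2) := by ring

theorem dirichletEnergy_sub_diagonal_diag [DecidableEq V] (W : Matrix V V ℝ) (x : V → ℝ) :
    dirichletEnergy (W - diagonal W.diag) x = dirichletEnergy W x := by
  refine Finset.sum_congr rfl fun i _ ↦ Finset.sum_congr rfl fun j _ ↦ ?_
  rcases eq_or_ne i j with rfl | hij
  · simp
  · rw [Matrix.sub_apply, diagonal_apply_ne _ hij, sub_zero]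

theorem dirichletEnergy_le_of_two_mul_le (hW : ∀ i j, 0 ≤ W i j) (hsymm : W.IsSymm) {t : ℝ}
    (ht : 0 ≤ t) (hWt : ∀ i j, i ≠ j → 2 * W i j ≤ t) (x : V → ℝ) :
    dirichletEnergy W x ≤ (∑ i, ∑ j, W i j + t) * ∑ i, x i ^ 2 := by
  classical
  set W₀ := W - diagonal W.diag with hW₀
  have hdiag (i : V) : W₀ i i = 0 := by simp [hW₀]
  have hoff {i j : V} (hij : i ≠ j) : W₀ i j = W i j := by simp [hW₀, hij]
  have hnonneg (i j : V) : 0 ≤ W₀ i j := by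
    rcases eq_or_ne i j with rfl | hij
    · exact (hdiag i).ge
    · exact (hoff hij).symm ▸ hW i j
  have hle (i j : V) : W₀ i j ≤ W i j := by
    rcases eq_or_ne i j with rfl | hij
    · exact (hdiag i).symm ▸ hW i i
    · exact (hoff hij).le
  have hsum : ∑ i, ∑ j, W₀ i j ≤ ∑ i, ∑ j, W i j :=
    Finset.sum_le_sum fun i _ ↦ Finset.sum_le_sum fun j _ ↦ hle i j
  have hsymm₀ : W₀.IsSymm := hsymm.sub (isSymm_diagonal _)
  rw [← dirichletEnergy_sub_diagonal_diag]
  refine dirichletEnergy_le_of_degree_add_degree_le hnonneg hsymm₀ ?_ (fun i j hij ↦ ?_) x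
  · exact add_nonneg (Finset.sum_nonneg fun i _ ↦ Finset.sum_nonneg fun j _ ↦ hW i j) ht
  · have h := two_mul_degree_add_degree_le hnonneg hsymm₀ hij
    rw [hdiag, hdiag, hoff hij] at h
    linarith [hWt i j hij]

end WeightedGraph

section Frobenius

variable {m n ι : Type*} [Fintype m] [Fintype n]

open scoped Matrix.Norms.Frobenius InnerProductSpace

theorem frobenius_norm_sq (A : Matrix m n ℝ) : ‖A‖ ^ 2 = ∑ i, ∑ j, A i j ^ 2 := by
  rw [frobenius_norm_def, ← Real.sqrt_eq_rpow, Real.sq_sqrt (by positivity)]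
  simp only [Real.rpow_two, Real.norm_eq_abs, sq_abs]

theorem frobenius_norm_sq_eq_trace (A : Matrix m n ℝ) : ‖A‖ ^ 2 = (Aᵀ * A).trace := by
  rw [frobenius_norm_sq, Finset.sum_comm]
  simp only [trace, diag_apply, mul_apply, transpose_apply, sq]

/-- The inner product `⟪A, B⟫ = trace (Aᵀ * B)` inducing the Frobenius norm on real matrices. -/
noncomputable abbrev frobeniusInnerProductSpace : InnerProductSpace ℝ (Matrix m n ℝ) where
  inner A B := (Aᵀ * B).trace
  norm_sq_eq_re_inner := frobenius_norm_sq_eq_trace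
  conj_inner_symm A B := by
    rw [conj_trivial, ← trace_transpose, transpose_mul, transpose_transpose]
  add_left A B C := by rw [transpose_add, Matrix.add_mul, trace_add]
  smul_left A B r := by rw [transpose_smul, Matrix.smul_mul, trace_smul, conj_trivial, smul_eq_mul]

attribute [local instance] frobeniusInnerProductSpace

theorem frobenius_inner_def (A B : Matrix m n ℝ) : ⟪A, B⟫_ℝ = (Aᵀ * B).trace := rfl

theorem frobenius_inner_of_isSymm {A : Matrix n n ℝ} (hA : A.IsSymm) (B : Matrix n n ℝ) :
    ⟪A, B⟫_ℝ = (A * B).trace := by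
  rw [frobenius_inner_def, hA.eq]

theorem frobenius_inner_single_add_single [DecidableEq n] {A : Matrix n n ℝ} (hA : A.IsSymm)
    (i j : n) : ⟪A, single i j 1 + single j i 1⟫_ℝ = 2 * A i j := by
  rw [inner_add_right, frobenius_inner_of_isSymm hA, frobenius_inner_of_isSymm hA,
    trace_mul_single, trace_mul_single]
  simp only [MulOpposite.op_one, one_smul, hA.apply, two_mul]

theorem frobenius_norm_sq_single_add_single [DecidableEq n] {i j : n} (hij : i ≠ j) :
    ‖(single i j 1 + single j i 1 : Matrix n n ℝ)‖ ^ 2 = 2 := by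
  have hsymm : (single i j 1 + single j i 1 : Matrix n n ℝ).IsSymm := by
    rw [IsSymm, transpose_add, transpose_single, transpose_single, add_comm]
  rw [← real_inner_self_eq_norm_sq, frobenius_inner_single_add_single hsymm]
  simp [hij]

theorem two_mul_sum_sq_apply_le {s : Finset ι} {X : ι → Matrix n n ℝ}
    (hX : ∀ b ∈ s, (X b).IsSymm)
    (horth : (s : Set ι).Pairwise fun b c ↦ ⟪X b, X c⟫_ℝ = 0) {t : ℝ} (ht : 0 ≤ t)
    (hXt : ∀ b ∈ s, ‖X b‖ ^ 2 ≤ t) {i j : n} (hij : i ≠ j) :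
    2 * ∑ b ∈ s, X b i j ^ 2 ≤ t := by
  classical
  have h := sum_norm_inner_sq_le_of_pairwise_inner_eq_zero horth ht hXt
    (single i j 1 + single j i 1)
  rw [frobenius_norm_sq_single_add_single hij] at h
  have hentry : ∑ b ∈ s, ‖⟪X b, single i j 1 + single j i 1⟫_ℝ‖ ^ 2 =
      4 * ∑ b ∈ s, X b i j ^ 2 := by
    rw [Finset.mul_sum]
    refine Finset.sum_congr rfl fun b hb ↦ ?_
    rw [frobenius_inner_single_add_single (hX b hb), Real.norm_eq_abs, sq_abs]
    ring
  linarith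

theorem frobenius_norm_sq_diagonal [DecidableEq n] (x : n → ℝ) :
    ‖diagonal x‖ ^ 2 = ∑ i, x i ^ 2 := by
  rw [frobenius_norm_diagonal, EuclideanSpace.real_norm_sq_eq]

theorem frobenius_norm_sq_commutator_diagonal [DecidableEq n] (x : n → ℝ) (X : Matrix n n ℝ) :
    ‖diagonal x * X - X * diagonal x‖ ^ 2 = ∑ i, ∑ j, X i j ^ 2 * (x i - x j) ^ 2 := by
  rw [frobenius_norm_sq]
  refine Finset.sum_congr rfl fun i _ ↦ Finset.sum_congr rfl fun j _ ↦ ?_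
  rw [Matrix.sub_apply, diagonal_mul, mul_diagonal]
  ring

theorem sum_norm_sq_commutator_diagonal_le [DecidableEq n] {s : Finset ι}
    {X : ι → Matrix n n ℝ} (hX : ∀ b ∈ s, (X b).IsSymm)
    (horth : (s : Set ι).Pairwise fun b c ↦ ⟪X b, X c⟫_ℝ = 0) {t : ℝ} (ht : 0 ≤ t)
    (hXt : ∀ b ∈ s, ‖X b‖ ^ 2 ≤ t) (x : n → ℝ) :
    ∑ b ∈ s, ‖diagonal x * X b - X b * diagonal x‖ ^ 2 ≤
      ‖diagonal x‖ ^ 2 * (∑ b ∈ s, ‖X b‖ ^ 2 + t) := by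
  set W : Matrix n n ℝ := of fun i j ↦ ∑ b ∈ s, X b i j ^ 2 with hW
  have hsymm : W.IsSymm := IsSymm.ext fun i j ↦
    Finset.sum_congr rfl fun b hb ↦ by rw [(hX b hb).apply]
  have hweight (f : n → n → ℝ) : ∑ b ∈ s, ∑ i, ∑ j, X b i j ^ 2 * f i j =
      ∑ i, ∑ j, W i j * f i j := by
    simp only [hW, of_apply, Finset.sum_mul, Finset.sum_comm (s := s)]
  have hsum : ∑ b ∈ s, ‖X b‖ ^ 2 = ∑ i, ∑ j, W i j := by
    simpa only [mul_one, ← frobenius_norm_sq] using hweight fun _ _ ↦ 1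
  have henergy : ∑ b ∈ s, ‖diagonal x * X b - X b * diagonal x‖ ^ 2 = dirichletEnergy W x := by
    simpa only [frobenius_norm_sq_commutator_diagonal, dirichletEnergy] using
      hweight fun i j ↦ (x i - x j) ^ 2
  rw [henergy, hsum, frobenius_norm_sq_diagonal, mul_comm]
  exact dirichletEnergy_le_of_two_mul_le (fun i j ↦ Finset.sum_nonneg fun b _ ↦ sq_nonneg _) hsymm
    ht (fun i j hij ↦ two_mul_sum_sq_apply_le hX horth ht hXt hij) x

theorem frobenius_inner_conjStarAlgAut [DecidableEq n] (U : unitaryGroup n ℝ) (X Y : Matrix n n ℝ) :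
    ⟪Unitary.conjStarAlgAut ℝ _ U X, Unitary.conjStarAlgAut ℝ _ U Y⟫_ℝ = ⟪X, Y⟫_ℝ := by
  simp only [frobenius_inner_def, ← conjTranspose_eq_transpose_of_trivial, ← star_eq_conjTranspose,
    ← map_star, ← map_mul, trace_conjStarAlgAut]

theorem frobenius_norm_conjStarAlgAut [DecidableEq n] (U : unitaryGroup n ℝ) (X : Matrix n n ℝ) :
    ‖Unitary.conjStarAlgAut ℝ _ U X‖ = ‖X‖ := by
  rw [norm_eq_sqrt_real_inner, frobenius_inner_conjStarAlgAut, ← norm_eq_sqrt_real_inner]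

theorem isSymm_conjStarAlgAut [DecidableEq n] {X : Matrix n n ℝ} (hX : X.IsSymm)
    (U : unitaryGroup n ℝ) : (Unitary.conjStarAlgAut ℝ _ U X).IsSymm := by
  rw [IsSymm, ← conjTranspose_eq_transpose_of_trivial, ← star_eq_conjTranspose, ← map_star,
    star_eq_conjTranspose, conjTranspose_eq_transpose_of_trivial, hX.eq]

theorem sum_norm_sq_commutator_le {A : Matrix n n ℝ} (hA : A.IsSymm) {s : Finset ι}
    {X : ι → Matrix n n ℝ} (hX : ∀ b ∈ s, (X b).IsSymm)
    (horth : (s : Set ι).Pairwise fun b c ↦ ⟪X b, X c⟫_ℝ = 0) {t : ℝ} (ht : 0 ≤ t)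
    (hXt : ∀ b ∈ s, ‖X b‖ ^ 2 ≤ t) :
    ∑ b ∈ s, ‖A * X b - X b * A‖ ^ 2 ≤ ‖A‖ ^ 2 * (∑ b ∈ s, ‖X b‖ ^ 2 + t) := by
  classical
  have hherm : A.IsHermitian := (conjTranspose_eq_transpose_of_trivial A).trans hA
  set φ := Unitary.conjStarAlgAut ℝ (Matrix n n ℝ) (star hherm.eigenvectorUnitary)
  have hφ (Y : Matrix n n ℝ) : ‖φ Y‖ = ‖Y‖ := frobenius_norm_conjStarAlgAut _ Y
  have hdiag : φ A = diagonal hherm.eigenvalues := hherm.conjStarAlgAut_star_eigenvectorUnitary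
  have h := sum_norm_sq_commutator_diagonal_le (X := fun b ↦ φ (X b))
    (fun b hb ↦ isSymm_conjStarAlgAut (hX b hb) _)
    (fun b hb c hc hbc ↦ (frobenius_inner_conjStarAlgAut _ _ _).trans (horth hb hc hbc)) ht
    (fun b hb ↦ by simpa only [hφ] using hXt b hb) hherm.eigenvalues
  simpa only [← hdiag, ← map_mul, ← map_sub, hφ] using h

variable [Fintype ι]

theorem sum_univ_norm_sq_commutator_le {A : ι → Matrix n n ℝ}
    (hA : ∀ α, (A α).IsSymm) (horth : Pairwise fun α β ↦ ⟪A α, A β⟫_ℝ = 0) (α : ι) {t : ℝ}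
    (ht : 0 ≤ t) (hAt : ∀ β, β ≠ α → ‖A β‖ ^ 2 ≤ t) :
    ∑ β, ‖A α * A β - A β * A α‖ ^ 2 ≤ ‖A α‖ ^ 2 * (∑ β, ‖A β‖ ^ 2 - ‖A α‖ ^ 2 + t) := by
  classical
  have hself : ‖A α * A α - A α * A α‖ ^ 2 = 0 := by simp
  rw [← Finset.sum_erase (f := fun β ↦ ‖A α * A β - A β * A α‖ ^ 2) _ hself,
    ← Finset.sum_erase_eq_sub (Finset.mem_univ α)]
  exact sum_norm_sq_commutator_le (hA α) (fun β _ ↦ hA β) (horth.set_pairwise _) ht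
    fun β hβ ↦ hAt β (Finset.ne_of_mem_erase hβ)

theorem sum_sq_trace_mul_of_pairwise_inner_eq_zero {A : ι → Matrix n n ℝ}
    (hA : ∀ α, (A α).IsSymm) (horth : Pairwise fun α β ↦ ⟪A α, A β⟫_ℝ = 0) (α : ι) :
    ∑ β, (A α * A β).trace ^ 2 = (‖A α‖ ^ 2) ^ 2 := by
  rw [← real_inner_self_eq_norm_sq]
  simp only [← frobenius_inner_of_isSymm (hA _)]
  exact Finset.sum_eq_single_of_mem α (Finset.mem_univ α) fun β _ hβ ↦ by
    rw [horth hβ.symm, sq, zero_mul]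

theorem sum_norm_sq_commutator_add_sum_sq_trace_le_of_pairwise {A : ι → Matrix n n ℝ}
    (hA : ∀ α, (A α).IsSymm) (horth : Pairwise fun α β ↦ ⟪A α, A β⟫_ℝ = 0) :
    ∑ α, ∑ β, ‖A α * A β - A β * A α‖ ^ 2 + ∑ α, ∑ β, (A α * A β).trace ^ 2 ≤
      (3 / 2 : ℝ) * (∑ α, ‖A α‖ ^ 2) ^ 2 := by
  classical
  rcases isEmpty_or_nonempty ι with hι | hι
  · simp
  obtain ⟨α₀, hmax⟩ := Finite.exists_max fun α ↦ ‖A α‖ ^ 2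
  set S := ∑ α, ‖A α‖ ^ 2
  set M := ‖A α₀‖ ^ 2
  have hothers : ∑ β ∈ Finset.univ.erase α₀, ‖A β‖ ^ 2 = S - M :=
    Finset.sum_erase_eq_sub (Finset.mem_univ α₀)
  have hM_le : 0 ≤ S - M := hothers ▸ Finset.sum_nonneg fun β _ ↦ sq_nonneg _
  have hle (β : ι) (hβ : β ≠ α₀) : ‖A β‖ ^ 2 ≤ S - M := hothers ▸
    Finset.single_le_sum (f := fun β ↦ ‖A β‖ ^ 2) (fun β _ ↦ sq_nonneg _)
      (Finset.mem_erase.2 ⟨hβ, Finset.mem_univ β⟩)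
  have hrow (α : ι) : ∑ β, ‖A α * A β - A β * A α‖ ^ 2 + ∑ β, (A α * A β).trace ^ 2 ≤
      ‖A α‖ ^ 2 * (S + M) + if α = α₀ then M * (S - 2 * M) else 0 := by
    rw [sum_sq_trace_mul_of_pairwise_inner_eq_zero hA horth]
    split_ifs with hα
    · subst hα
      have := sum_univ_norm_sq_commutator_le hA horth α hM_le hle
      linarith
    · have := sum_univ_norm_sq_commutator_le hA horth α (sq_nonneg _) fun β _ ↦ hmax β
      linarith
  calc _ ≤ ∑ α, (‖A α‖ ^ 2 * (S + M) + if α = α₀ then M * (S - 2 * M) else 0) := by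
        rw [← Finset.sum_add_distrib]
        exact Finset.sum_le_sum fun α _ ↦ hrow α
    _ = S * (S + M) + M * (S - 2 * M) := by
        rw [Finset.sum_add_distrib, ← Finset.sum_mul, Finset.sum_ite_eq' Finset.univ,
          if_pos (Finset.mem_univ α₀)]
    _ ≤ 3 / 2 * S ^ 2 := by linarith [sq_nonneg (S - 2 * M)]

theorem li_li_lemma_general (A : ι → Matrix n n ℝ) (hA : ∀ α, (A α).IsSymm) :
    ∑ α, ∑ β, ‖A α * A β - A β * A α‖ ^ 2 + ∑ α, ∑ β, (A α * A β).trace ^ 2 ≤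
      (3 / 2 : ℝ) * (∑ α, ‖A α‖ ^ 2) ^ 2 := by
  classical
  let mul := LinearMap.mul ℝ (Matrix n n ℝ)
  obtain ⟨U, hU⟩ := exists_unitary_pairwise_inner_frameChange_eq_zero (𝕜 := ℝ) A
  have hcomm := sum_sum_norm_sq_frameChange U A (mul - mul.flip)
  have htrace := sum_sum_norm_sq_frameChange U A (mul.compr₂ (traceLinearMap n ℝ ℝ))
  have h := sum_norm_sq_commutator_add_sum_sq_trace_le_of_pairwise (isSymm_frameChange U.1 hA) hU
  simp only [mul, LinearMap.sub_apply, LinearMap.mul_apply', LinearMap.flip_apply,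
    LinearMap.compr₂_apply, traceLinearMap_apply, Real.norm_eq_abs, sq_abs] at hcomm htrace
  rwa [hcomm, htrace, sum_norm_sq_frameChange] at h

end Frobenius

theorem li_li_lemma {n p : ℕ} (hp : 2 ≤ p) (A : Fin p → Matrix (Fin n) (Fin n) ℝ)
    (hA : ∀ α, (A α).IsSymm) :
    (∑ α, ∑ β, frobN (A α * A β - A β * A α)) +
      (∑ α, ∑ β, ((A α * A β).trace) ^ 2) ≤
    (3 / 2 : ℝ) * (∑ α, frobN (A α)) ^ 2 := by
  simpa only [frobN, frobenius_norm_sq_eq_trace] using li_li_lemma_general A hA
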